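/- Let p be a prime, t ≥ 2, 1 ≤ s ≤ t−1, q = p^t, and let θ be the automorphism of 𝔽_q given by θ(a) = a^{p^s}. Let f_0, ..., f_k ∈ 𝔽_q with f_k ≠ 0 and let n > k. Let C ⊆ 𝔽_q^n be the code generated by f(t) = ∑_{i=0}^{k} f_i t^i in 𝔽_q[t;θ], and let C^{[]_s} ⊆ 𝔽_q^{[n]_s} be the code generated by the [p^s]-polynomial f^{[]_s}(X) = ∑_{i=0}^{k} f_i·X^{[i]_s} in 𝔽_q[X], i.e., the 𝔽_q-span of the coefficient vectors of X^j·f^{[]_s}(X) for 0 ≤ j ≤ [n]_s − 1 − [k]_s. Then d(C^{[]_s}) = d(C) if and only if there exists a nonzero codeword c ∈ C^{[]_s} with wt(c) = d(C^{[]_s}) such that c_j = 0 for every position j that is not of the form [i]_s for some integer i ≥ 0 (i.e., the polynomial corresponding to c belongs to 𝔽_q[X^{[]_s}]). -/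

import Mathlib

/-!
The map `v ↦ ∑ vᵢ X^[i]_s` identifies `𝔽_q^n` with the vectors of length `[n]_s` supported on the
positions `[i]_s`, and it preserves the Hamming weight. The point of the proof is that under this
identification `C` is exactly the set of codewords of `C^{[]_s}` with such a support.

Write `g = f^{[]_s}`. Codewords of `C^{[]_s}` are the multiples of `g` of degree `< [n]_s`
(`mem_code_iff`). Because `[i + j]_s = [j]_s + [i]_s p^{sj}`, the generator `t^j f` of `C` is sent
to `X^[j]_s g^{p^{sj}}` (`brPoly_genVec`), a multiple of `g`, so `C` lands in `C^{[]_s}`.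
Conversely, if `g` divides `∑ vᵢ X^[i]_s`, then right division of `∑ vᵢ t^i` by `f` in
`𝔽_q[t;θ]`, done by cancelling leading terms, leaves a remainder of degree `< k`; its image is a
multiple of `g` of degree `< [k]_s = deg g`, hence zero, and `v ∈ C` (`mem_skewCode_iff`).

Consequently `d(C^{[]_s}) ≤ d(C)`, with equality exactly when some minimum weight codeword of
`C^{[]_s}` lies in the image of `C`, i.e. is supported on the positions `[i]_s`.
-/

/-- `br p s i = [i]_s = 1 + p^s + p^{2s} + ⋯ + p^{(i-1)s} = ((p^s)^i - 1)/(p^s - 1)`. -/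
def br (p s i : ℕ) : ℕ := ∑ j ∈ Finset.range i, (p ^ s) ^ j

/-- `genVec n θ a j` is the coefficient vector of `t^j · a(t)` in `𝔽_q[t;θ]`:
it has entry `θ^j(a_i)` in position `i + j` and `0` in positions `< j`. -/
def genVec (n : ℕ) {F : Type*} [Field F] (θ : F ≃+* F) (a : ℕ → F) (j : ℕ) :
    Fin n → F :=
  fun idx => if j ≤ idx.val then (⇑θ)^[j] (a (idx.val - j)) else 0

/-- The minimum Hamming distance of a (nonzero) linear code: the minimum
Hamming weight of a nonzero codeword. -/
noncomputable def minDist {n : ℕ} {F : Type*} [Field F] [DecidableEq F]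
    (C : Set (Fin n → F)) : ℕ :=
  sInf {d | ∃ c ∈ C, c ≠ 0 ∧ hammingNorm c = d}

open Polynomial

lemma br_strictMono {p : ℕ} (hp : p.Prime) (s : ℕ) : StrictMono (br p s) := by
  refine strictMono_nat_of_lt_succ fun i => ?_
  have : 0 < (p ^ s) ^ i := pow_pos (pow_pos hp.pos s) i
  simp only [br, Finset.sum_range_succ]
  omega

lemma br_add (p s j i : ℕ) : br p s (j + i) = br p s j + br p s i * p ^ (s * j) := by
  simp only [br, Finset.sum_range_add, Finset.sum_mul]
  congr 1
  refine Finset.sum_congr rfl fun x _ => ?_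
  rw [pow_add, pow_mul, mul_comm]

section

variable {F : Type*} [Field F]

/-- The `[p^s]`-polynomial `∑_{i<n} vᵢ X^[i]_s` attached to a vector `v`. -/
noncomputable def brPoly (p s : ℕ) {n : ℕ} : (Fin n → F) →ₗ[F] F[X] where
  toFun v := ∑ i : Fin n, C (v i) * X ^ br p s i
  map_add' u v := by simp [add_mul, Finset.sum_add_distrib]
  map_smul' a v := by simp [Finset.mul_sum, mul_assoc, smul_eq_C_mul]

lemma brPoly_apply (p s : ℕ) {n : ℕ} (v : Fin n → F) :
    brPoly p s v = ∑ i : Fin n, C (v i) * X ^ br p s i := rfl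

/-- The vector of the first `N` coefficients of a polynomial. -/
def coeffVec (N : ℕ) : F[X] →ₗ[F] (Fin N → F) where
  toFun Q := fun idx => Q.coeff idx
  map_add' _ _ := by ext; simp
  map_smul' _ _ := by ext; simp

lemma coeffVec_apply (N : ℕ) (Q : F[X]) (i : Fin N) : coeffVec N Q i = Q.coeff i := rfl

/-- The polynomial with prescribed first `N` coefficients and no others. -/
noncomputable def vecPoly (N : ℕ) : (Fin N → F) →ₗ[F] F[X] where
  toFun u := ∑ i : Fin N, C (u i) * X ^ (i : ℕ)
  map_add' u v := by simp [add_mul, Finset.sum_add_distrib]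
  map_smul' a v := by simp [Finset.mul_sum, mul_assoc, smul_eq_C_mul]

lemma vecPoly_coeffVec {N : ℕ} {Q : F[X]} (hQ : Q.degree < N) :
    vecPoly N (coeffVec N Q) = Q := by
  change ∑ i : Fin N, C (Q.coeff i) * X ^ (i : ℕ) = Q
  rw [Fin.sum_univ_eq_sum_range (fun i => C (Q.coeff i) * X ^ i)]
  by_cases h0 : Q = 0
  · simp [h0]
  · have := (natDegree_lt_iff_degree_lt h0).2 hQ
    conv_rhs => rw [as_sum_range' Q N this]
    simp [C_mul_X_pow_eq_monomial]

/-- The polynomial code of length `N` generated by `g`, a polynomial of degree `K`, consists of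
the coefficient vectors of the multiples of `g` of degree `< N`. -/
lemma mem_code_iff {N K : ℕ} {g : F[X]} (hg : g.degree = K) {Q : F[X]} (hQ : Q.degree < N) :
    coeffVec N Q ∈ Submodule.span F {u : Fin N → F | ∃ j < N - K,
      u = fun idx : Fin N => (X ^ j * g).coeff idx.val} ↔ g ∣ Q := by
  have hg0 : g ≠ 0 := by
    rintro rfl
    simp at hg
  constructor
  · intro h
    rw [← vecPoly_coeffVec hQ]
    generalize coeffVec N Q = u at h
    induction h using Submodule.span_induction with
    | mem u hu =>
      obtain ⟨j, hj, rfl⟩ := hu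
      have : vecPoly N (coeffVec N (X ^ j * g)) = X ^ j * g := by
        apply vecPoly_coeffVec
        rw [degree_mul, degree_X_pow, hg]
        exact_mod_cast (by omega : j + K < N)
      have e : (fun idx : Fin N => (X ^ j * g).coeff idx.val) = coeffVec N (X ^ j * g) := rfl
      rw [e, this]
      exact Dvd.intro_left _ rfl
    | zero => simp
    | add u v _ _ hu hv => rw [map_add]; exact dvd_add hu hv
    | smul a u _ hu => rw [map_smul, smul_eq_C_mul]; exact hu.mul_left _
  · rintro ⟨h, rfl⟩
    by_cases h0 : h = 0
    · simp [h0]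
    have hd : h.natDegree < N - K := by
      rw [degree_mul, hg, degree_eq_natDegree h0] at hQ
      have : K + h.natDegree < N := by exact_mod_cast hQ
      omega
    have hsum : g * h = ∑ j ∈ Finset.range (N - K), h.coeff j • (X ^ j * g) := by
      conv_lhs => rw [as_sum_range' h (N - K) hd, Finset.mul_sum]
      refine Finset.sum_congr rfl fun j _ => ?_
      rw [← C_mul_X_pow_eq_monomial, smul_eq_C_mul]
      ring
    rw [hsum, map_sum]
    refine Submodule.sum_mem _ fun j hj => ?_
    rw [map_smul]
    exact Submodule.smul_mem _ _ (Submodule.subset_span ⟨j, Finset.mem_range.1 hj, rfl⟩)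

lemma coeff_brPoly {p : ℕ} (hp : p.Prime) (s : ℕ) {n : ℕ} (v : Fin n → F) (i : Fin n) :
    (brPoly p s v).coeff (br p s i) = v i := by
  rw [brPoly_apply, finsetSum_coeff, Finset.sum_eq_single i]
  · simp
  · intro b _ hb
    rw [coeff_C_mul_X_pow, if_neg]
    intro h
    exact hb (Fin.ext ((br_strictMono hp s).injective h).symm)
  · simp

lemma coeff_brPoly_of_ne {p s n : ℕ} (v : Fin n → F) (m : ℕ)
    (h : ∀ i : ℕ, m ≠ br p s i) : (brPoly p s v).coeff m = 0 := by
  rw [brPoly_apply, finsetSum_coeff]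
  exact Finset.sum_eq_zero fun i _ => by rw [coeff_C_mul_X_pow, if_neg (h i)]

/-- If the entries of `v` from position `m` on vanish, then `∑ vᵢ X^[i]_s` has degree
`< [m]_s`. -/
lemma degree_brPoly_lt {p : ℕ} (hp : p.Prime) (s : ℕ) {n m : ℕ} (v : Fin n → F)
    (hv : ∀ i : Fin n, m ≤ i.val → v i = 0) : (brPoly p s v).degree < br p s m := by
  rw [brPoly_apply, ← mem_degreeLT]
  refine Submodule.sum_mem _ fun i _ => ?_
  rcases lt_or_ge i.val m with h | h
  · rw [mem_degreeLT]
    refine (degree_C_mul_X_pow_le _ _).trans_lt ?_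
    exact_mod_cast br_strictMono hp s h
  · simp [hv i h]

lemma degree_bracket {p : ℕ} (hp : p.Prime) (s k : ℕ) (f : ℕ → F) (hfk : f k ≠ 0) :
    (∑ i ∈ Finset.range (k + 1), C (f i) * X ^ br p s i).degree =
      ((br p s k : ℕ) : WithBot ℕ) := by
  have h := degree_brPoly_lt hp s (m := k) (fun i : Fin k => f i)
    (fun i hi => absurd i.2 (not_lt.2 hi))
  rw [brPoly_apply, Fin.sum_univ_eq_sum_range (fun i => C (f i) * X ^ br p s i)] at h
  rw [Finset.sum_range_succ, degree_add_eq_right_of_degree_lt, degree_C_mul_X_pow _ hfk]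
  rwa [degree_C_mul_X_pow _ hfk]

lemma hammingNorm_coeffVec_brPoly [DecidableEq F] {p : ℕ} (hp : p.Prime) (s : ℕ) {n : ℕ}
    (v : Fin n → F) : hammingNorm (coeffVec (br p s n) (brPoly p s v)) = hammingNorm v := by
  symm
  unfold hammingNorm
  refine Finset.card_bij (fun i _ => ⟨br p s i, br_strictMono hp s i.2⟩) ?_ ?_ ?_
  · intro i hi
    refine Finset.mem_filter.2 ⟨Finset.mem_univ _, ?_⟩
    rw [coeffVec_apply, coeff_brPoly hp s v i]
    exact (Finset.mem_filter.1 hi).2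
  · intro i _ j _ h
    exact Fin.ext ((br_strictMono hp s).injective (Fin.mk.inj_iff.1 h))
  · intro b hb
    have hb' : (brPoly p s v).coeff b ≠ 0 := (Finset.mem_filter.1 hb).2
    obtain ⟨i, hi⟩ : ∃ i, b.val = br p s i := by
      by_contra! h
      exact hb' (coeff_brPoly_of_ne v b h)
    have hin : i < n := (br_strictMono hp s).lt_iff_lt.1 (hi ▸ b.2)
    refine ⟨⟨i, hin⟩, ?_, Fin.ext hi.symm⟩
    rw [hi, coeff_brPoly hp s v ⟨i, hin⟩] at hb'
    simpa using hb'

/-- A vector supported on the positions `[i]_s` comes from a `[p^s]`-polynomial. -/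
lemma exists_brPoly {p : ℕ} (hp : p.Prime) (s : ℕ) {n : ℕ} (c : Fin (br p s n) → F)
    (hc : ∀ j : Fin (br p s n), (∀ i : ℕ, j.val ≠ br p s i) → c j = 0) :
    ∃ v : Fin n → F, coeffVec (br p s n) (brPoly p s v) = c := by
  refine ⟨fun i => c ⟨br p s i, br_strictMono hp s i.2⟩, ?_⟩
  ext b
  rw [coeffVec_apply]
  by_cases h : ∀ i : ℕ, b.val ≠ br p s i
  · rw [hc b h, coeff_brPoly_of_ne _ _ h]
  · push Not at h
    obtain ⟨i, hi⟩ := h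
    have hin : i < n := (br_strictMono hp s).lt_iff_lt.1 (hi ▸ b.2)
    rw [hi, coeff_brPoly hp s _ ⟨i, hin⟩]
    exact congrArg c (Fin.ext hi.symm)

lemma iterate_frob {p s : ℕ} {θ : F ≃+* F} (hθ : ∀ a : F, θ a = a ^ p ^ s) (j : ℕ) (a : F) :
    (⇑θ)^[j] a = a ^ p ^ (s * j) := by
  induction j with
  | zero => simp
  | succ j ih => rw [Function.iterate_succ_apply', ih, hθ, ← pow_mul, ← pow_add, mul_add, mul_one]

/-- The generator `t^j f` of the skew code corresponds to `X^[j]_s (f^{[]_s})^{p^{sj}}`. -/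
lemma brPoly_genVec {p s : ℕ} (hp : p.Prime) [CharP F p] {θ : F ≃+* F}
    (hθ : ∀ a : F, θ a = a ^ p ^ s) {n k : ℕ} {f : ℕ → F} (hftop : ∀ i, k < i → f i = 0)
    {j : ℕ} (hj : j < n - k) :
    brPoly p s (genVec n θ f j) =
      X ^ br p s j * (∑ i ∈ Finset.range (k + 1), C (f i) * X ^ br p s i) ^ p ^ (s * j) := by
  have : Fact p.Prime := ⟨hp⟩
  rw [sum_pow_char_pow, Finset.mul_sum, brPoly_apply]
  obtain ⟨d, rfl⟩ : ∃ d, n = j + ((k + 1) + d) := ⟨n - j - (k + 1), by omega⟩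
  simp only [genVec]
  rw [Fin.sum_univ_eq_sum_range
    (fun i => C (if j ≤ i then (⇑θ)^[j] (f (i - j)) else 0) * X ^ br p s i),
    Finset.sum_range_add, Finset.sum_range_add]
  have h1 : ∑ i ∈ Finset.range j,
      C (if j ≤ i then (⇑θ)^[j] (f (i - j)) else 0) * X ^ br p s i = 0 :=
    Finset.sum_eq_zero fun i hi => by
      rw [if_neg (not_le.2 (Finset.mem_range.1 hi))]
      simp
  have h2 : ∑ i ∈ Finset.range d, C (if j ≤ j + (k + 1 + i) then
      (⇑θ)^[j] (f (j + (k + 1 + i) - j)) else 0) * X ^ br p s (j + (k + 1 + i)) = 0 :=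
    Finset.sum_eq_zero fun i _ => by
      rw [if_pos (by omega), iterate_frob hθ, hftop _ (by omega),
        zero_pow (pow_ne_zero _ hp.ne_zero)]
      simp
  rw [h1, h2, zero_add, add_zero]
  refine Finset.sum_congr rfl fun i _ => ?_
  rw [if_pos (by omega), iterate_frob hθ, br_add, Nat.add_sub_cancel_left, mul_pow, ← C_pow,
    ← pow_mul, pow_add]
  ring

/-- The skew code consists of the vectors whose `[p^s]`-polynomial is a multiple of
`f^{[]_s}`. -/
lemma mem_skewCode_iff {p s : ℕ} (hp : p.Prime) [CharP F p] {θ : F ≃+* F}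
    (hθ : ∀ a : F, θ a = a ^ p ^ s) {n k : ℕ} {f : ℕ → F} (hfk : f k ≠ 0)
    (hftop : ∀ i, k < i → f i = 0) (v : Fin n → F) :
    v ∈ Submodule.span F {v : Fin n → F | ∃ j < n - k, v = genVec n θ f j} ↔
      (∑ i ∈ Finset.range (k + 1), C (f i) * X ^ br p s i) ∣ brPoly p s v := by
  set g := ∑ i ∈ Finset.range (k + 1), C (f i) * X ^ br p s i with hg
  have hgen : ∀ j < n - k, g ∣ brPoly p s (genVec n θ f j) := by
    intro j hj
    rw [brPoly_genVec hp hθ hftop hj]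
    exact (dvd_pow_self _ (pow_ne_zero _ hp.ne_zero)).mul_left _
  constructor
  · intro h
    induction h using Submodule.span_induction with
    | mem u hu =>
      obtain ⟨j, hj, rfl⟩ := hu
      exact hgen j hj
    | zero => simp
    | add u v _ _ hu hv => rw [map_add]; exact dvd_add hu hv
    | smul a u _ hu => rw [map_smul, smul_eq_C_mul]; exact hu.mul_left _
  · -- Right division by `f`, as an induction on a bound `m` for the support of `v`.
    suffices H : ∀ m : ℕ, m ≤ n → ∀ v : Fin n → F, (∀ i : Fin n, m ≤ i.val → v i = 0) →
        g ∣ brPoly p s v →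
        v ∈ Submodule.span F {v : Fin n → F | ∃ j < n - k, v = genVec n θ f j} from
      H n le_rfl v fun i hi => absurd i.2 (not_lt.2 hi)
    intro m
    induction m with
    | zero =>
      intro _ v hv _
      have : v = 0 := funext fun i => hv i (Nat.zero_le _)
      rw [this]
      exact Submodule.zero_mem _
    | succ m ih =>
      intro hm v hv hdvd
      rcases lt_or_ge m k with hmk | hmk
      · have hlt : (brPoly p s v).degree < g.degree := by
          rw [hg, degree_bracket hp s k f hfk]
          refine (degree_brPoly_lt hp s v hv).trans_le ?_
          exact_mod_cast (br_strictMono hp s).monotone hmk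
        have h0 := eq_zero_of_dvd_of_degree_lt hdvd hlt
        have : v = 0 := funext fun i => by
          rw [← coeff_brPoly hp s v i, h0]
          simp
        rw [this]
        exact Submodule.zero_mem _
      · have hj : m - k < n - k := by omega
        -- The entry of `t^(m-k) f` in position `m` is the leading one, `θ^(m-k)(f k)`.
        set b := (⇑θ)^[m - k] (f k) with hb
        have hb0 : b ≠ 0 := by
          rw [hb, iterate_frob hθ]
          exact pow_ne_zero _ hfk
        set a := v ⟨m, hm⟩ / b with ha
        have hmem : a • genVec n θ f (m - k) ∈
            Submodule.span F {v : Fin n → F | ∃ j < n - k, v = genVec n θ f j} :=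
          Submodule.smul_mem _ _ (Submodule.subset_span ⟨m - k, hj, rfl⟩)
        have hrest := ih (by omega) (v - a • genVec n θ f (m - k)) ?_ ?_
        · simpa using Submodule.add_mem _ hrest hmem
        · intro i hi
          rcases hi.eq_or_lt with h | h
          · obtain rfl : i = ⟨m, hm⟩ := Fin.ext h.symm
            have : genVec n θ f (m - k) ⟨m, hm⟩ = b := by
              simp only [genVec]
              rw [if_pos (by omega), Nat.sub_sub_self hmk]
            rw [Pi.sub_apply, Pi.smul_apply, this, ha, smul_eq_mul, div_mul_cancel₀ _ hb0,
              sub_self]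
          · have : genVec n θ f (m - k) i = 0 := by
              simp only [genVec]
              rw [if_pos (by omega), hftop _ (by omega), iterate_frob hθ,
                zero_pow (pow_ne_zero _ hp.ne_zero)]
            rw [Pi.sub_apply, Pi.smul_apply, this, hv i h]
            simp
        · rw [map_sub, map_smul, smul_eq_C_mul]
          exact dvd_sub hdvd ((hgen _ hj).mul_left _)

lemma minDist_le [DecidableEq F] {n : ℕ} {C : Set (Fin n → F)} {c : Fin n → F} (hc : c ∈ C)
    (h0 : c ≠ 0) : minDist C ≤ hammingNorm c :=
  Nat.sInf_le ⟨c, hc, h0, rfl⟩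

lemma exists_minDist [DecidableEq F] {n : ℕ} {C : Set (Fin n → F)} {c : Fin n → F} (hc : c ∈ C)
    (h0 : c ≠ 0) : ∃ c ∈ C, c ≠ 0 ∧ hammingNorm c = minDist C :=
  Nat.sInf_mem (s := {d | ∃ c ∈ C, c ≠ 0 ∧ hammingNorm c = d}) ⟨_, c, hc, h0, rfl⟩

end

/-- with `C` and `C^{[]ₛ}` as in Statement 10, `d(C^{[]ₛ}) = d(C)`
iff some nonzero codeword of `C^{[]ₛ}` of minimal weight is supported on the
positions of the form `[i]_s`, i.e. corresponds to a polynomial of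
`𝔽_q[X^{[]ₛ}]`. -/
theorem stmt_11 {p t s : ℕ} (hp : p.Prime) (ht : 2 ≤ t) (hs1 : 1 ≤ s)
    (hs2 : s ≤ t - 1)
    {F : Type*} [Field F] [Fintype F] [DecidableEq F]
    (hF : Fintype.card F = p ^ t)
    (θ : F ≃+* F) (hθ : ∀ a : F, θ a = a ^ p ^ s)
    (n k : ℕ) (hkn : k < n)
    (f : ℕ → F) (hfk : f k ≠ 0) (hftop : ∀ i, k < i → f i = 0) :
    (minDist ((Submodule.span F {u : Fin (br p s n) → F |
        ∃ j < br p s n - br p s k,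
          u = fun idx : Fin (br p s n) =>
            (Polynomial.X ^ j *
              ∑ i ∈ Finset.range (k + 1),
                Polynomial.C (f i) * Polynomial.X ^ br p s i).coeff idx.val} :
        Submodule F (Fin (br p s n) → F)) : Set (Fin (br p s n) → F)) =
      minDist ((Submodule.span F {v : Fin n → F | ∃ j < n - k, v = genVec n θ f j} :
        Submodule F (Fin n → F)) : Set (Fin n → F))) ↔
    (∃ c ∈ (Submodule.span F {u : Fin (br p s n) → F |
        ∃ j < br p s n - br p s k,
          u = fun idx : Fin (br p s n) =>
            (Polynomial.X ^ j *
              ∑ i ∈ Finset.range (k + 1),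
                Polynomial.C (f i) * Polynomial.X ^ br p s i).coeff idx.val} :
        Submodule F (Fin (br p s n) → F)), c ≠ 0 ∧
      hammingNorm c = minDist ((Submodule.span F {u : Fin (br p s n) → F |
        ∃ j < br p s n - br p s k,
          u = fun idx : Fin (br p s n) =>
            (Polynomial.X ^ j *
              ∑ i ∈ Finset.range (k + 1),
                Polynomial.C (f i) * Polynomial.X ^ br p s i).coeff idx.val} :
        Submodule F (Fin (br p s n) → F)) : Set (Fin (br p s n) → F)) ∧
      ∀ j : Fin (br p s n), (∀ i : ℕ, j.val ≠ br p s i) → c j = 0) := by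
  classical
  have : Fact p.Prime := ⟨hp⟩
  have : CharP F p := charP_of_card_eq_prime_pow hF
  set g : F[X] := ∑ i ∈ Finset.range (k + 1), C (f i) * X ^ br p s i with hg
  set D := Submodule.span F {u : Fin (br p s n) → F | ∃ j < br p s n - br p s k,
    u = fun idx : Fin (br p s n) => (X ^ j * g).coeff idx.val} with hD
  set E := Submodule.span F {v : Fin n → F | ∃ j < n - k, v = genVec n θ f j} with hE
  -- `C` is the preimage of `C^{[]_s}` under the weight-preserving embedding.
  have key : ∀ v : Fin n → F, coeffVec (br p s n) (brPoly p s v) ∈ D ↔ v ∈ E := by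
    intro v
    rw [hD, hE, mem_skewCode_iff hp hθ hfk hftop, mem_code_iff (degree_bracket hp s k f hfk)
      (degree_brPoly_lt hp s v fun i hi => absurd i.2 (not_lt.2 hi))]
  have hwt := fun v : Fin n → F => hammingNorm_coeffVec_brPoly hp s v
  have hne : ∀ v : Fin n → F, coeffVec (br p s n) (brPoly p s v) ≠ 0 ↔ v ≠ 0 := by
    intro v
    rw [← hammingNorm_ne_zero_iff, hwt, hammingNorm_ne_zero_iff]
  have hgen : genVec n θ f 0 ∈ E := Submodule.subset_span ⟨0, by omega, rfl⟩
  have hgen0 : genVec n θ f 0 ≠ 0 := by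
    intro h
    have := congrFun h ⟨k, hkn⟩
    simp [genVec, hfk] at this
  obtain ⟨v, hv, hv0, hvd⟩ := exists_minDist (C := (E : Set (Fin n → F))) hgen hgen0
  constructor
  · intro h
    refine ⟨_, (key v).2 hv, (hne v).2 hv0, ?_, fun j hj => coeff_brPoly_of_ne v j hj⟩
    rw [hwt, hvd, h]
  · rintro ⟨c, hc, hc0, hcd, hsupp⟩
    obtain ⟨w, rfl⟩ := exists_brPoly hp s c hsupp
    apply le_antisymm
    · rw [← hvd, ← hwt v]
      exact minDist_le ((key v).2 hv) ((hne v).2 hv0)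
    · rw [← hcd, hwt]
      exact minDist_le ((key w).1 hc) ((hne w).1 hc0)
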